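/- Let γ_1, …, γ_n : R → R be arbitrary functions. Then ∏_{j=1}^{n} γ_j(λ̂_j) = γ_1(λ_1) · ∏_{j=2}^{n} γ_j( Σ_{ℓ=2}^{j} C_{j,ℓ} · (λ_ℓ + ε_1 A^{(0)}_{ℓ,1} λ_1) ); that is, the product of weight factors for a system on n edges equals the factor of the first edge evaluated at its bare weight times the product of factors of a reduced system on edges 2, …, n whose input weights are shifted by ε_1 A^{(0)}_{ℓ,1} λ_1. -/

import Mathlib

open Finset

/-- Product of adjacency factors along a path `ℓ → j₁ → ⋯ → jₚ → k`:
for each consecutive pair `(a, b)` in the list, a factor `A^{(a-1)}_{b,a}`. -/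
def pathProd {R : Type*} [CommRing R] (A : ℕ → ℕ → ℕ → R) : List ℕ → R
  | [] => 1
  | [_] => 1
  | a :: b :: rest => A (a - 1) b a * pathProd A (b :: rest)

/-- The quantity `𝒜_{k,ℓ}(Q)` for a subset `Q = {j₁ < ⋯ < jₚ} ⊆ {ℓ+1,…,k−1}`. -/
def calA {R : Type*} [CommRing R] (ε : ℕ → R) (A : ℕ → ℕ → ℕ → R)
    (k ℓ : ℕ) (Q : Finset ℕ) : R :=
  (ε ℓ * ∏ j ∈ Q, ε j) * pathProd A (ℓ :: ((Q.sort (· ≤ ·)) ++ [k]))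

/-- The coefficients `C_{k,ℓ}`: `C_{k,k} = 1` and, for `k > ℓ`,
`C_{k,ℓ} = Σ_{Q ⊆ {ℓ+1,…,k−1}} 𝒜_{k,ℓ}(Q)`. -/
def Cgen {R : Type*} [CommRing R] (ε : ℕ → R) (A : ℕ → ℕ → ℕ → R) (k ℓ : ℕ) : R :=
  if k = ℓ then 1 else ∑ Q ∈ (Finset.Ioo ℓ k).powerset, calA ε A k ℓ Q

/-- The modified weight `λ̂ₖ = Σ_{ℓ=1}^{k} C_{k,ℓ} λ_ℓ`. -/
def lamHat {R : Type*} [CommRing R] (ε : ℕ → R) (A : ℕ → ℕ → ℕ → R)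
    (lam : ℕ → R) (k : ℕ) : R :=
  ∑ ℓ ∈ Finset.Icc 1 k, Cgen ε A k ℓ * lam ℓ

/-!
For `ℓ < k`, `C_{k,ℓ}` sums over the increasing paths from `ℓ` to `k`. Splitting each path at its
first step `ℓ → j` gives the recursion `C_{k,ℓ} = Σ_{ℓ<j≤k} C_{k,j} ε_ℓ A^{(ℓ-1)}_{j,ℓ}`. Hence, in
a weight `Σ_ℓ C_{k,ℓ} λ_ℓ`, the contribution of the lowest edge is absorbed into a shift of the bare
weights of the higher edges, and only the factor of the lowest edge itself keeps its bare weight.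
-/

section PathCoefficients

variable {R : Type*} [CommRing R] (ε : ℕ → R) (A : ℕ → ℕ → ℕ → R)

theorem calA_insert (k ℓ : ℕ) {j : ℕ} {Q : Finset ℕ} (hQ : ∀ i ∈ Q, j < i) :
    calA ε A k ℓ (insert j Q) = calA ε A k j Q * (ε ℓ * A (ℓ - 1) j ℓ) := by
  have hj : j ∉ Q := fun h => (hQ j h).false
  rw [calA, calA, prod_insert hj, sort_insert _ (fun i hi => (hQ i hi).le) hj, List.cons_append,
    pathProd]
  ring

@[simp]
theorem calA_empty (k ℓ : ℕ) : calA ε A k ℓ ∅ = ε ℓ * A (ℓ - 1) k ℓ := by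
  simp [calA, pathProd]

@[simp]
theorem Cgen_self (k : ℕ) : Cgen ε A k k = 1 :=
  if_pos rfl

theorem Cgen_of_lt {k ℓ : ℕ} (h : ℓ < k) :
    Cgen ε A k ℓ = ∑ Q ∈ (Ico (ℓ + 1) k).powerset, calA ε A k ℓ Q := by
  rw [Cgen, if_neg h.ne', Ico_add_one_left_eq_Ioo]

-- The source `ℓ` stays fixed while the induction lowers the bound `m` on the other vertices.
theorem sum_powerset_Ico_calA (ℓ : ℕ) {m k : ℕ} (h : m ≤ k) :
    ∑ Q ∈ (Ico m k).powerset, calA ε A k ℓ Q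
      = ∑ j ∈ Icc m k, Cgen ε A k j * (ε ℓ * A (ℓ - 1) j ℓ) := by
  induction h using Nat.decreasingInduction with
  | self => simp
  | of_succ m hmk ih =>
    have paths_through_m : ∑ Q ∈ (Ico (m + 1) k).powerset, calA ε A k ℓ (insert m Q)
        = Cgen ε A k m * (ε ℓ * A (ℓ - 1) m ℓ) := by
      rw [Cgen_of_lt ε A hmk, sum_mul]
      exact sum_congr rfl fun Q hQ =>
        calA_insert ε A k ℓ fun i hi => (mem_Ico.mp (mem_powerset.mp hQ hi)).1
    rw [← insert_Ico_add_one_left_eq_Ico hmk, sum_powerset_insert (by simp), paths_through_m, ih,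
      ← insert_Icc_add_one_left_eq_Icc hmk.le, sum_insert (by simp), add_comm]

theorem Cgen_eq_sum_first_step {k ℓ : ℕ} (h : ℓ < k) :
    Cgen ε A k ℓ = ∑ j ∈ Icc (ℓ + 1) k, Cgen ε A k j * (ε ℓ * A (ℓ - 1) j ℓ) := by
  rw [Cgen_of_lt ε A h, sum_powerset_Ico_calA ε A ℓ h]

theorem sum_Cgen_mul_eq_sum_shifted (lam : ℕ → R) {m k : ℕ} (h : m < k) :
    ∑ ℓ ∈ Icc m k, Cgen ε A k ℓ * lam ℓ
      = ∑ ℓ ∈ Icc (m + 1) k, Cgen ε A k ℓ * (lam ℓ + ε m * A (m - 1) ℓ m * lam m) := by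
  rw [← insert_Icc_add_one_left_eq_Icc h.le, sum_insert (by simp), Cgen_eq_sum_first_step ε A h,
    sum_mul, ← sum_add_distrib]
  exact sum_congr rfl fun ℓ _ => by ring

-- With lowest edge `m + 1`, the superscript `m` of `A` involves no truncated subtraction.
theorem prod_factors_first_edge_general {M : Type*} [CommMonoid M] {m n : ℕ} (hmn : m + 1 ≤ n)
    (γ : ℕ → R → M) (lam : ℕ → R) :
    (∏ j ∈ Icc (m + 1) n, γ j (∑ ℓ ∈ Icc (m + 1) j, Cgen ε A j ℓ * lam ℓ))
      = γ (m + 1) (lam (m + 1)) *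
          ∏ j ∈ Icc (m + 2) n,
            γ j (∑ ℓ ∈ Icc (m + 2) j,
              Cgen ε A j ℓ * (lam ℓ + ε (m + 1) * A m ℓ (m + 1) * lam (m + 1))) := by
  rw [← insert_Icc_add_one_left_eq_Icc hmn, prod_insert (by simp)]
  congr 1
  · simp
  · refine prod_congr rfl fun j hj => ?_
    rw [sum_Cgen_mul_eq_sum_shifted ε A lam (mem_Icc.mp hj).1, Nat.add_sub_cancel]

end PathCoefficients

/-- For arbitrary functions `γ₁, …, γₙ : R → R`,
`∏_{j=1}^{n} γⱼ(λ̂ⱼ) = γ₁(λ₁) · ∏_{j=2}^{n} γⱼ(Σ_{ℓ=2}^{j} C_{j,ℓ} · (λ_ℓ + ε₁ A^{(0)}_{ℓ,1} λ₁))`: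
the product of weight factors for a system on `n` edges equals the factor of the first edge
evaluated at its bare weight times the product of factors of a reduced system on edges
`2, …, n` whose input weights are shifted by `ε₁ A^{(0)}_{ℓ,1} λ₁`. -/
theorem prod_factors_first_edge {R : Type*} [CommRing R] (ε : ℕ → R) (A : ℕ → ℕ → ℕ → R)
    (n : ℕ) (hn : 1 ≤ n) (γ : ℕ → R → R) (lam : ℕ → R) :
    (∏ j ∈ Finset.Icc 1 n, γ j (lamHat ε A lam j))
      = γ 1 (lam 1) *
          ∏ j ∈ Finset.Icc 2 n,
            γ j (∑ ℓ ∈ Finset.Icc 2 j, Cgen ε A j ℓ * (lam ℓ + ε 1 * A 0 ℓ 1 * lam 1)) :=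
  prod_factors_first_edge_general ε A hn γ lam
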